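/- Method 3.2 (generalized Sato criterion). Let ℰ = (𝒳, Σ, {P_θ}_{θ∈Θ}) be a statistical model, μ a σ-finite measure on (𝒳,Σ) with P_θ ≪ μ for every θ, (𝒳,Σ) an analytic Borel space, (𝒯,Σ_𝒯) a separable measurable space, T : 𝒳 → 𝒯 measurable, and for each θ ∈ Θ let f_θ : 𝒳 → ℝ be a density of P_θ with respect to μ. Suppose there exists a nonempty countable subset Θ₀ ⊆ Θ such that for each θ ∈ Θ there is a sequence (θ_n)_{n∈ℕ} in Θ₀ with lim_{n→∞} f_{θ_n} existing in ℝ μ-a.e. and, for every x ∈ 𝒳, f_θ(x) = lim_{n→∞} f_{θ_n}(x) if this limit exists and f_θ(x) = 0 otherwise. Define D(x) := {y ∈ 𝒳 : ∃ h_{xy} ∈ (0,∞) with f_θ(y) = f_θ(x)·h_{xy} for every θ ∈ Θ}. If for all x, y ∈ 𝒳 one has T(x) = T(y) if and only if y ∈ D(x), then T is minimal sufficient. -/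

import Mathlib

open MeasureTheory

noncomputable section

universe u v w u'

/-- `f` is a (pointwise nonnegative, measurable) density of `P` w.r.t. `μ`,
i.e. a version of the Radon–Nikodym derivative `dP/dμ`. -/
def IsDensity {X : Type*} [MeasurableSpace X] (P μ : Measure X) (f : X → ℝ) : Prop :=
  Measurable f ∧ (∀ x, 0 ≤ f x) ∧ P = μ.withDensity (fun x => ENNReal.ofReal (f x))

/-- The proportionality set `D(x, Θ')` determined by a family of densities. -/
def DSet {X : Type*} {Θ : Type*} (f : Θ → X → ℝ) (x : X) (Θ' : Set Θ) : Set X :=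
  {y | ∃ h : ℝ, 0 < h ∧ ∀ θ ∈ Θ', f θ y = f θ x * h}

/-- A statistic `T` is sufficient for the model `{P θ}`. -/
def IsSufficientStat {X : Type u} [mX : MeasurableSpace X] {Θ : Type v}
    (P : Θ → Measure X) {T' : Type w} [mT : MeasurableSpace T'] (T : X → T') : Prop :=
  Measurable T ∧
  ∀ E : Set X, MeasurableSet E → ∃ κ : T' → ℝ, Measurable κ ∧
    ∀ θ : Θ, (P θ)[E.indicator (fun _ => (1 : ℝ)) | MeasurableSpace.comap T mT] =ᵐ[P θ] κ ∘ T

/-- A statistic `T` is minimal sufficient: it is sufficient and it factors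
`P θ`-a.e. (for every `θ`) through every sufficient statistic via a measurable map. -/
def IsMinimalSufficientStat {X : Type u} [mX : MeasurableSpace X] {Θ : Type v}
    (P : Θ → Measure X) {T' : Type w} [mT : MeasurableSpace T'] (T : X → T') : Prop :=
  IsSufficientStat P T ∧
  ∀ (S' : Type u') (mS : MeasurableSpace S') (S : X → S'),
    @IsSufficientStat X mX Θ P S' mS S →
      ∃ g : S' → T', @Measurable S' T' mS mT g ∧ ∀ θ : Θ, T =ᵐ[P θ] g ∘ S

/-- A measurable space is analytic Borel iff it is separable (countably generated with
measurable singletons) and it is the image of a standard Borel space under a surjective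
measurable map. -/
def IsAnalyticBorel (X : Type u) [mX : MeasurableSpace X] : Prop :=
  MeasurableSpace.CountablyGenerated X ∧ MeasurableSingletonClass X ∧
  ∃ (Y : Type u) (mY : MeasurableSpace Y), @StandardBorelSpace Y mY ∧
    ∃ g : Y → X, @Measurable Y X mY mX g ∧ Function.Surjective g

/-- A sub-σ-algebra `m ⊆ Σ` is sufficient for the model `{P θ}`. -/
def IsSufficientSubalgebra {X : Type u} [mX : MeasurableSpace X] {Θ : Type v}
    (P : Θ → Measure X) (m : MeasurableSpace X) : Prop :=
  m ≤ mX ∧ ∀ E : Set X, MeasurableSet[mX] E → ∃ κ : X → ℝ, Measurable[m] κ ∧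
    ∀ θ : Θ, (P θ)[E.indicator (fun _ => (1 : ℝ)) | m] =ᵐ[P θ] κ

/-- The collection `𝔑_ℰ` of measurable sets null under every `P θ`. -/
def modelNullSets {X : Type u} [mX : MeasurableSpace X] {Θ : Type v}
    (P : Θ → Measure X) : Set (Set X) :=
  {N | MeasurableSet N ∧ ∀ θ, P θ N = 0}

/-- The σ-algebra `𝔄̄^ℰ` generated by `𝔄 ∪ 𝔑_ℰ`. -/
def completionAlg {X : Type u} [mX : MeasurableSpace X] {Θ : Type v}
    (P : Θ → Measure X) (m : MeasurableSpace X) : MeasurableSpace X :=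
  MeasurableSpace.generateFrom ({s | MeasurableSet[m] s} ∪ @modelNullSets X mX Θ P)

/-- A sub-σ-algebra is minimal sufficient iff it is sufficient and contained in the
`𝔑_ℰ`-completion of every sufficient sub-σ-algebra. -/
def IsMinimalSufficientSubalgebra {X : Type u} [mX : MeasurableSpace X] {Θ : Type v}
    (P : Θ → Measure X) (m : MeasurableSpace X) : Prop :=
  @IsSufficientSubalgebra X mX Θ P m ∧
  ∀ m' : MeasurableSpace X, @IsSufficientSubalgebra X mX Θ P m' →
    m ≤ @completionAlg X mX Θ P m'

/-- The total variation distance `d_ℰ(θ₁, θ₂) = sup_{E ∈ Σ} |P θ₁ E - P θ₂ E|`. -/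
def tvDist {X : Type u} [MeasurableSpace X] {Θ : Type v} (P : Θ → Measure X)
    (θ₁ θ₂ : Θ) : ℝ :=
  ⨆ E : {E : Set X // MeasurableSet E}, |(P θ₁ E.1).toReal - (P θ₂ E.1).toReal|

/-- The coarsest topology `τ⟨ℰ⟩` on `Θ` making `θ ↦ P θ E` continuous for every `E ∈ Σ`. -/
def modelTopology {X : Type u} [MeasurableSpace X] {Θ : Type v} (P : Θ → Measure X) :
    TopologicalSpace Θ :=
  ⨅ E : {E : Set X // MeasurableSet E},
    TopologicalSpace.induced (fun θ => (P θ E.1).toReal) inferInstance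

lemma blackwell_aux {X : Type u} [mX : MeasurableSpace X] (hX : IsAnalyticBorel X)
    {T' : Type*} [mT : MeasurableSpace T'] {Z : Type*} [mZ : MeasurableSpace Z]
    [MeasurableSpace.CountablySeparated T']
    {T : X → T'} (hT : Measurable T) {R : X → Z} (hR : Measurable R)
    (h : ∀ x y, T x = T y → R x = R y) :
    MeasurableSpace.comap R mZ ≤ MeasurableSpace.comap T mT := by
  obtain ⟨-, -, Y, mY, hY, g, hg, hgs⟩ := hX
  rintro _ ⟨B, hB, rfl⟩
  have hTg : Measurable (T ∘ g) := hT.comp hg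
  have key : (T ∘ g) ⁻¹' (T '' (R ⁻¹' B)) = g ⁻¹' (R ⁻¹' B) := by
    ext y
    constructor
    · rintro ⟨x, hx, hxy⟩
      have := h _ _ hxy
      simp only [Set.mem_preimage] at hx ⊢
      rwa [← this]
    · intro hy
      exact ⟨g y, hy, rfl⟩
  have hm : MeasurableSet ((T ∘ g) ⁻¹' (T '' (R ⁻¹' B))) := by
    rw [key]; exact hg (hR hB)
  have : MeasurableSpace.CountablySeparated (Set.range (T ∘ g)) := by
    exact MeasurableSpace.Subtype.countablySeparated
  rw [hTg.measurableSet_preimage_iff_preimage_val] at hm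
  obtain ⟨C, hC, hCe⟩ := hm
  refine ⟨C, hC, ?_⟩
  ext x
  obtain ⟨y, rfl⟩ := hgs x
  have h1 := Set.ext_iff.1 hCe ⟨T (g y), y, rfl⟩
  have h2 := Set.ext_iff.1 key y
  simp only [Set.mem_preimage, Function.comp] at h1 h2 ⊢
  rw [h1, h2]

lemma analytic_inner_eps {Z : Type*} [TopologicalSpace Z] [PolishSpace Z]
    [MeasurableSpace Z] [BorelSpace Z] (ρ : Measure Z) [IsFiniteMeasure ρ]
    {F : (ℕ → ℕ) → Z} (hF : Continuous F) {α : ENNReal} (hα : α < ρ (Set.range F)) :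
    ∃ K : Set Z, K ⊆ Set.range F ∧ MeasurableSet K ∧ α ≤ ρ K := by
  have step : ∀ (D : {D : Set (ℕ → ℕ) // α < ρ (F '' D)}) (n : ℕ),
      ∃ b : ℕ, α < ρ (F '' (D.1 ∩ {x | x n ≤ b})) := by
    rintro ⟨D, hD⟩ n
    have hmono : Monotone fun b : ℕ => F '' (D ∩ {x | x n ≤ b}) := by
      intro b c hbc
      apply Set.image_mono
      rintro x ⟨h1, h2⟩
      exact ⟨h1, le_trans h2 hbc⟩
    have hU : F '' D = ⋃ b : ℕ, F '' (D ∩ {x | x n ≤ b}) := by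
      ext z
      simp only [Set.mem_iUnion]
      constructor
      · rintro ⟨x, hx, rfl⟩
        exact ⟨x n, x, ⟨hx, le_refl (x n)⟩, rfl⟩
      · rintro ⟨b, x, hx, rfl⟩
        exact ⟨x, hx.1, rfl⟩
    rw [hU, hmono.measure_iUnion] at hD
    exact lt_iSup_iff.1 hD
  choose b hb using step
  let D : ℕ → {D : Set (ℕ → ℕ) // α < ρ (F '' D)} := fun n =>
    Nat.rec ⟨Set.univ, by rwa [Set.image_univ]⟩
      (fun n D => ⟨D.1 ∩ {x | x n ≤ b D n}, hb D n⟩) n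
  have hD0 : (D 0).1 = Set.univ := rfl
  have hDs : ∀ n, (D (n+1)).1 = (D n).1 ∩ {x | x n ≤ b (D n) n} := fun n => rfl
  set c : ℕ → ℕ := fun n => b (D n) n with hc
  have hDc : ∀ n, (D n).1 = {x | ∀ i < n, x i ≤ c i} := by
    intro n
    induction n with
    | zero => rw [hD0]; ext x; simp
    | succ n ih =>
      rw [hDs, ih]
      ext x
      simp only [Set.mem_inter_iff, Set.mem_ofPred_eq, Nat.lt_succ_iff_lt_or_eq]
      constructor
      · rintro ⟨h1, h2⟩ i (hi | rfl)
        · exact h1 i hi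
        · exact h2
      · intro h
        exact ⟨fun i hi => h i (Or.inl hi), h n (Or.inr rfl)⟩
  let C : Set (ℕ → ℕ) := Set.univ.pi fun i => Set.Iic (c i)
  have hCc : IsCompact C := isCompact_univ_pi fun i => (Set.finite_Iic (c i)).isCompact
  have hKc : IsCompact (F '' C) := hCc.image hF
  refine ⟨F '' C, Set.image_subset_range _ _, hKc.measurableSet, ?_⟩
  let _ := TopologicalSpace.upgradeIsCompletelyMetrizable Z
  rw [Set.measure_eq_iInf_isOpen]
  refine le_iInf fun U => le_iInf fun hCU => le_iInf fun hU => ?_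
  suffices ∃ n, (D n).1 ⊆ F ⁻¹' U by
    obtain ⟨n, hn⟩ := this
    exact (D n).2.le.trans (measure_mono (Set.image_subset_iff.2 hn))
  by_contra hcon
  push Not at hcon
  have : ∀ n, ∃ x, x ∈ (D n).1 ∧ F x ∉ U := by
    intro n
    obtain ⟨x, h1, h2⟩ := Set.not_subset.1 (hcon n)
    exact ⟨x, h1, h2⟩
  choose x hx hxU using this
  let y : ℕ → ℕ → ℕ := fun n i => if i < n then x n i else 0
  have hy : ∀ n, y n ∈ C := by
    intro n i _
    have := hx n
    rw [hDc] at this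
    simp only [Set.mem_Iic, y]
    split_ifs with hi
    · exact this i hi
    · exact Nat.zero_le _
  obtain ⟨z, hz, φ, hφ, hlim⟩ := hCc.tendsto_subseq hy
  have hlim2 : Filter.Tendsto (x ∘ φ) Filter.atTop (nhds z) := by
    rw [tendsto_pi_nhds] at hlim ⊢
    intro i
    refine (hlim i).congr' ?_
    filter_upwards [Filter.eventually_gt_atTop i] with n hn
    have : i < φ n := lt_of_lt_of_le hn (hφ.id_le n)
    simp [y, this]
  have hzU : F z ∈ U := hCU ⟨z, hz, rfl⟩
  have hev := hlim2.eventually ((hU.preimage hF).mem_nhds hzU)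
  obtain ⟨n, hn⟩ := hev.exists
  exact hxU _ hn

lemma analytic_inner {Z : Type*} [TopologicalSpace Z] [PolishSpace Z]
    [MeasurableSpace Z] [BorelSpace Z] (ρ : Measure Z) [IsFiniteMeasure ρ]
    {A : Set Z} (hA : AnalyticSet A) :
    ∃ B : Set Z, B ⊆ A ∧ MeasurableSet B ∧ ρ A ≤ ρ B := by
  rcases Set.eq_empty_or_nonempty A with rfl | hne
  · exact ⟨∅, le_rfl, MeasurableSet.empty, le_rfl⟩
  rw [AnalyticSet] at hA
  rcases hA with rfl | ⟨F, hF, rfl⟩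
  · exact absurd hne (by simp)
  by_cases h0 : ρ (Set.range F) = 0
  · exact ⟨∅, Set.empty_subset _, MeasurableSet.empty, by simp [h0]⟩
  obtain ⟨a, -, ha, hlim⟩ := exists_seq_strictMono_tendsto' (pos_iff_ne_zero.2 h0)
  have : ∀ n, ∃ K : Set Z, K ⊆ Set.range F ∧ MeasurableSet K ∧ a n ≤ ρ K :=
    fun n => analytic_inner_eps ρ hF (ha n).2
  choose K hK1 hK2 hK3 using this
  refine ⟨⋃ n, K n, Set.iUnion_subset hK1, MeasurableSet.iUnion hK2, ?_⟩
  exact le_of_tendsto' hlim fun n => (hK3 n).trans (measure_mono (Set.subset_iUnion K n))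

lemma setIntegral_density {X : Type*} [mX : MeasurableSpace X] (l : Measure X)
    {k : X → ℝ} (hk : Measurable k) (hk0 : ∀ x, 0 ≤ k x) (h : X → ℝ) {A : Set X}
    (hA : MeasurableSet A) :
    ∫ x in A, h x ∂(l.withDensity fun x => ENNReal.ofReal (k x)) = ∫ x in A, k x * h x ∂l := by
  rw [setIntegral_withDensity_eq_setIntegral_toReal_smul hk.ennreal_ofReal
    (by filter_upwards with x; exact ENNReal.ofReal_lt_top) _ hA]
  refine integral_congr_ae ?_
  filter_upwards with x
  simp [ENNReal.toReal_ofReal (hk0 x)]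

lemma integrable_density {X : Type*} [mX : MeasurableSpace X] {l Q : Measure X}
    [IsProbabilityMeasure Q]
    {k : X → ℝ} (hk : Measurable k) (hk0 : ∀ x, 0 ≤ k x)
    (hQ : Q = l.withDensity fun x => ENNReal.ofReal (k x)) : Integrable k l := by
  refine ⟨hk.aestronglyMeasurable, ?_⟩
  rw [hasFiniteIntegral_iff_ofReal (by filter_upwards with x using hk0 x)]
  have : Q Set.univ = 1 := measure_univ
  rw [hQ, withDensity_apply _ MeasurableSet.univ, Measure.restrict_univ] at this
  rw [this]; exact ENNReal.one_lt_top

lemma condExp_ind_bdd {X : Type*} [mX : MeasurableSpace X] (l : Measure X)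
    [IsProbabilityMeasure l] (m : MeasurableSpace X) (E : Set X) :
    ∀ᵐ x ∂l, ‖(l[E.indicator (fun _ => (1 : ℝ)) | m]) x‖ ≤ 1 := by
  have := ae_bdd_condExp_of_ae_bdd (μ := l) (m := m) (R := 1)
    (f := E.indicator (fun _ => (1 : ℝ))) (by
      filter_upwards with x
      by_cases hx : x ∈ E <;> simp [hx])
  filter_upwards [this] with x hx
  simpa using hx

lemma ind_int {X : Type*} [mX : MeasurableSpace X] (l : Measure X)
    [IsProbabilityMeasure l] {E : Set X} (hE : MeasurableSet E) :
    Integrable (E.indicator (fun _ => (1 : ℝ))) l :=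
  (integrable_const (1 : ℝ)).indicator hE

lemma suff_of_density {X : Type u} [mX : MeasurableSpace X] {Θ : Type v}
    (P : Θ → Measure X) (hP : ∀ θ, IsProbabilityMeasure (P θ))
    {T' : Type w} [mT : MeasurableSpace T'] (T : X → T') (hT : Measurable T)
    (l : Measure X) [IsProbabilityMeasure l] (k : Θ → X → ℝ) (hk0 : ∀ θ x, 0 ≤ k θ x)
    (hkm : ∀ θ, Measurable[MeasurableSpace.comap T mT] (k θ))
    (hPk : ∀ θ, P θ = l.withDensity (fun x => ENNReal.ofReal (k θ x))) :
    IsSufficientStat P T := by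
  refine ⟨hT, fun E hE => ?_⟩
  have hm : MeasurableSpace.comap T mT ≤ mX := hT.comap_le
  have hsm : StronglyMeasurable[MeasurableSpace.comap T mT]
      (l[E.indicator (fun _ => (1 : ℝ)) | MeasurableSpace.comap T mT]) :=
    stronglyMeasurable_condExp
  obtain ⟨κ, hκ, hκe⟩ := hsm.measurable.exists_eq_measurable_comp
  refine ⟨κ, hκ, fun θ => ?_⟩
  rw [← hκe]
  have := hP θ
  have hkX : Measurable (k θ) := (hkm θ).mono hm le_rfl
  have hki : Integrable (k θ) l := integrable_density hkX (hk0 θ) (hPk θ)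
  have hac : P θ ≪ l := by rw [hPk θ]; exact withDensity_absolutelyContinuous _ _
  have hb : ∀ᵐ x ∂(P θ),
      ‖(l[E.indicator (fun _ => (1 : ℝ)) | MeasurableSpace.comap T mT]) x‖ ≤ 1 :=
    hac.ae_le (condExp_ind_bdd l _ E)
  have hci : Integrable (l[E.indicator (fun _ => (1 : ℝ)) | MeasurableSpace.comap T mT]) (P θ) :=
    Integrable.of_bound (hsm.mono hm).aestronglyMeasurable 1 hb
  symm
  refine ae_eq_condExp_of_forall_setIntegral_eq hm (ind_int _ hE)
    (fun s _ _ => hci.integrableOn) (fun A hA _ => ?_) hsm.aestronglyMeasurable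
  have hpi : Integrable (k θ * E.indicator (fun _ => (1 : ℝ))) l := by
    refine Integrable.mul_bdd (c := 1) hki (ind_int l hE).aestronglyMeasurable ?_
    filter_upwards with x
    by_cases hx : x ∈ E <;> simp [hx]
  have hpull := condExp_mul_of_stronglyMeasurable_left (hkm θ).stronglyMeasurable hpi (ind_int l hE)
  rw [hPk θ, setIntegral_density l hkX (hk0 θ) _ (hm _ hA),
    setIntegral_density l hkX (hk0 θ) _ (hm _ hA)]
  have h1 := setIntegral_condExp hm hpi hA
  simp only [Pi.mul_apply] at h1
  rw [← h1]
  refine setIntegral_congr_ae (hm _ hA) ?_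
  filter_upwards [hpull] with x hx _
  rw [hx]; rfl

lemma density_factor {X : Type u} [mX : MeasurableSpace X] {Θ : Type v}
    (P : Θ → Measure X) (hP : ∀ θ, IsProbabilityMeasure (P θ))
    {S' : Type u'} [mS : MeasurableSpace S'] (S : X → S') (hS : IsSufficientStat P S)
    (l : Measure X) [IsProbabilityMeasure l] (c : ℕ → ENNReal) (t : ℕ → Θ)
    (hl : l = Measure.sum fun n => c n • P (t n))
    (θ : Θ) (k : X → ℝ) (hk0 : ∀ x, 0 ≤ k x) (hk : Measurable k)
    (hPk : P θ = l.withDensity (fun x => ENNReal.ofReal (k x))) :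
    ∃ ψ : S' → ℝ, Measurable ψ ∧ k =ᵐ[l] ψ ∘ S := by
  obtain ⟨hSm, hS⟩ := hS
  have hm : MeasurableSpace.comap S mS ≤ mX := hSm.comap_le
  have := hP θ
  have hki : Integrable k l := integrable_density hk hk0 hPk
  have hac : P θ ≪ l := by rw [hPk]; exact withDensity_absolutelyContinuous _ _
  have hpm : StronglyMeasurable[MeasurableSpace.comap S mS] (l[k | MeasurableSpace.comap S mS]) := stronglyMeasurable_condExp
  obtain ⟨ψ, hψ, hψe⟩ := hpm.measurable.exists_eq_measurable_comp
  refine ⟨ψ, hψ, ?_⟩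
  rw [← hψe]
  refine hki.ae_eq_of_forall_setIntegral_eq _ _ integrable_condExp (fun E hE _ => ?_)
  obtain ⟨κ, hκ, hκP⟩ := hS E hE
  set e : X → ℝ := E.indicator (fun _ => (1 : ℝ)) with he
  have heb : ∀ᵐ x ∂l, ‖e x‖ ≤ 1 := by
    filter_upwards with x
    by_cases hx : x ∈ E <;> simp [hx, he]
  have hei : Integrable e l := ind_int l hE
  have hκm : StronglyMeasurable[MeasurableSpace.comap S mS] (κ ∘ S) :=
    (hκ.comp (comap_measurable S)).stronglyMeasurable
  have hκbn : ∀ θ, ∀ᵐ x ∂(P θ), ‖(κ ∘ S) x‖ ≤ 1 := by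
    intro θ
    have := hP θ
    filter_upwards [hκP θ, condExp_ind_bdd (P θ) _ E] with x h1 h2
    rw [← h1]; exact h2
  have hκb : ∀ᵐ x ∂l, ‖(κ ∘ S) x‖ ≤ 1 := by
    rw [hl, Measure.ae_sum_iff]
    intro n
    exact Measure.ae_smul_measure (hκbn _) _
  have hκi : Integrable (κ ∘ S) l := Integrable.of_bound (hκm.mono hm).aestronglyMeasurable 1 hκb
  have hκc : κ ∘ S =ᵐ[l] l[e | MeasurableSpace.comap S mS] := by
    refine ae_eq_condExp_of_forall_setIntegral_eq hm hei
      (fun s _ _ => hκi.integrableOn) (fun A hA _ => ?_) hκm.aestronglyMeasurable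
    have hr : l.restrict A = Measure.sum fun n => (c n • P (t n)).restrict A := by
      rw [hl, Measure.restrict_sum _ (hm _ hA)]
    have i1 : Integrable (κ ∘ S) (l.restrict A) := hκi.integrableOn
    have i2 : Integrable e (l.restrict A) := hei.integrableOn
    rw [hr] at i1 i2 ⊢
    rw [integral_sum_measure i1, integral_sum_measure i2]
    congr 1
    ext n
    rw [Measure.restrict_smul, integral_smul_measure, integral_smul_measure]
    congr 1
    have := hP (t n)
    rw [← setIntegral_condExp hm (ind_int (P (t n)) hE) hA]
    refine setIntegral_congr_ae (hm _ hA) ?_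
    filter_upwards [hκP (t n)] with x hx _
    exact hx.symm
  have hkκ : Integrable (k * (κ ∘ S)) l :=
    Integrable.mul_bdd (c := 1) hki (hκm.mono hm).aestronglyMeasurable hκb
  have hp1 := condExp_mul_of_stronglyMeasurable_right hκm hkκ hki
  have hpe : Integrable (l[k | MeasurableSpace.comap S mS] * e) l :=
    Integrable.mul_bdd (c := 1) integrable_condExp hei.aestronglyMeasurable heb
  have hp2 := condExp_mul_of_stronglyMeasurable_left hpm hpe hei
  have setE : ∀ h : X → ℝ, ∫ x in E, h x ∂l = ∫ x, h x * e x ∂l := by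
    intro h
    rw [← integral_indicator hE]
    congr 1
    ext x
    by_cases hx : x ∈ E <;> simp [hx, he]
  have dens : ∀ h : X → ℝ, ∫ x, h x ∂(P θ) = ∫ x, k x * h x ∂l := by
    intro h
    have := setIntegral_density l hk hk0 h MeasurableSet.univ
    rw [← hPk] at this
    simpa using this
  calc ∫ x in E, k x ∂l = ∫ x, k x * e x ∂l := setE k
    _ = ∫ x, e x ∂(P θ) := (dens e).symm
    _ = ∫ x, ((P θ)[e | MeasurableSpace.comap S mS]) x ∂(P θ) := (integral_condExp hm).symm
    _ = ∫ x, (κ ∘ S) x ∂(P θ) := integral_congr_ae (hκP θ)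
    _ = ∫ x, (k * (κ ∘ S)) x ∂l := dens _
    _ = ∫ x, (l[k * (κ ∘ S) | MeasurableSpace.comap S mS]) x ∂l := (integral_condExp hm).symm
    _ = ∫ x, (l[(l[k | MeasurableSpace.comap S mS]) * e | MeasurableSpace.comap S mS]) x ∂l := by
        refine integral_congr_ae ?_
        filter_upwards [hp1, hp2, hκc] with x h1 h2 h3
        rw [h1, h2, Pi.mul_apply, Pi.mul_apply, h3]
    _ = ∫ x, (l[k | MeasurableSpace.comap S mS] * e) x ∂l := integral_condExp hm
    _ = ∫ x in E, (l[k | MeasurableSpace.comap S mS]) x ∂l := (setE _).symm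

lemma DSet_extend {X : Type*} {Θ : Type*} (f : Θ → X → ℝ) (Θ₀ : Set Θ)
    (happrox : ∀ θ : Θ, ∃ θseq : ℕ → Θ, (∀ n, θseq n ∈ Θ₀) ∧
      (∀ x : X,
        ((∃ L : ℝ, Filter.Tendsto (fun n => f (θseq n) x) Filter.atTop (nhds L)) →
          Filter.Tendsto (fun n => f (θseq n) x) Filter.atTop (nhds (f θ x))) ∧
        ((¬ ∃ L : ℝ, Filter.Tendsto (fun n => f (θseq n) x) Filter.atTop (nhds L)) →
          f θ x = 0)))
    {x y : X} {h : ℝ} (hh : 0 < h) (hxy : ∀ θ ∈ Θ₀, f θ y = f θ x * h) (θ : Θ) :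
    f θ y = f θ x * h := by
  obtain ⟨s, hs, hlim⟩ := happrox θ
  have hs' : (fun n => f (s n) y) = fun n => f (s n) x * h := by
    ext n; exact hxy _ (hs n)
  by_cases hx : ∃ L : ℝ, Filter.Tendsto (fun n => f (s n) x) Filter.atTop (nhds L)
  · have h1 := ((hlim x).1 hx).mul_const h
    rw [← hs'] at h1
    exact tendsto_nhds_unique ((hlim y).1 ⟨_, h1⟩) h1
  · have hy : ¬ ∃ L : ℝ, Filter.Tendsto (fun n => f (s n) y) Filter.atTop (nhds L) := by
      rintro ⟨L, hL⟩
      apply hx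
      refine ⟨L / h, ?_⟩
      rw [hs'] at hL
      refine (hL.div_const h).congr fun n => ?_
      field_simp
    rw [(hlim x).2 hx, (hlim y).2 hy, zero_mul]

lemma zero_extend {X : Type*} {Θ : Type*} (f : Θ → X → ℝ) (Θ₀ : Set Θ)
    (happrox : ∀ θ : Θ, ∃ θseq : ℕ → Θ, (∀ n, θseq n ∈ Θ₀) ∧
      (∀ x : X,
        ((∃ L : ℝ, Filter.Tendsto (fun n => f (θseq n) x) Filter.atTop (nhds L)) →
          Filter.Tendsto (fun n => f (θseq n) x) Filter.atTop (nhds (f θ x))) ∧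
        ((¬ ∃ L : ℝ, Filter.Tendsto (fun n => f (θseq n) x) Filter.atTop (nhds L)) →
          f θ x = 0)))
    {x : X} (hx : ∀ θ ∈ Θ₀, f θ x = 0) (θ : Θ) : f θ x = 0 := by
  obtain ⟨s, hs, hlim⟩ := happrox θ
  have h1 : Filter.Tendsto (fun n => f (s n) x) Filter.atTop (nhds 0) := by
    have : (fun n => f (s n) x) = fun _ => 0 := by ext n; exact hx _ (hs n)
    rw [this]; exact tendsto_const_nhds
  exact tendsto_nhds_unique ((hlim x).1 ⟨0, h1⟩) h1

lemma ratios_prop {a b : ℕ → ℝ} (ha : ∀ n, 0 ≤ a n) (hb : ∀ n, 0 ≤ b n)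
    (h : ∀ i j, a i / a j = b i / b j) : ∃ c : ℝ, 0 < c ∧ ∀ n, b n = a n * c := by
  have hz : ∀ n, a n = 0 ↔ b n = 0 := by
    intro n
    have := h n n
    constructor
    · intro h0
      by_contra h1
      rw [h0, div_self h1] at this
      simp at this
    · intro h0
      by_contra h1
      rw [h0, div_self h1] at this
      simp at this
  by_cases hall : ∀ n, a n = 0
  · exact ⟨1, one_pos, fun n => by rw [(hz n).1 (hall n), hall n, zero_mul]⟩
  push Not at hall
  obtain ⟨j, hj⟩ := hall
  have hbj : b j ≠ 0 := fun h0 => hj ((hz j).2 h0)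
  have ha' : 0 < a j := lt_of_le_of_ne (ha j) hj.symm
  have hb' : 0 < b j := lt_of_le_of_ne (hb j) hbj.symm
  refine ⟨b j / a j, div_pos hb' ha', fun n => ?_⟩
  have := h n j
  rw [div_eq_div_iff hj hbj] at this
  field_simp
  linarith

/-- Method 3.2 (generalized Sato criterion). -/
theorem method_3_2
    {X : Type u} [mX : MeasurableSpace X] {Θ : Type v} [Nonempty Θ]
    (P : Θ → Measure X) (hP : ∀ θ, IsProbabilityMeasure (P θ))
    (μ : Measure X) (hμ : SigmaFinite μ) (hac : ∀ θ, P θ ≪ μ)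
    (hX : IsAnalyticBorel X)
    {T' : Type w} [mT : MeasurableSpace T']
    (hTcg : MeasurableSpace.CountablyGenerated T')
    (hTsing : MeasurableSingletonClass T')
    (T : X → T') (hT : Measurable T)
    (f : Θ → X → ℝ) (hf : ∀ θ, IsDensity (P θ) μ (f θ))
    (Θ₀ : Set Θ) (hne : Θ₀.Nonempty) (hcount : Θ₀.Countable)
    (happrox : ∀ θ : Θ, ∃ θseq : ℕ → Θ, (∀ n, θseq n ∈ Θ₀) ∧
      (∀ᵐ x ∂μ, ∃ L : ℝ, Filter.Tendsto (fun n => f (θseq n) x) Filter.atTop (nhds L)) ∧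
      (∀ x : X,
        ((∃ L : ℝ, Filter.Tendsto (fun n => f (θseq n) x) Filter.atTop (nhds L)) →
          Filter.Tendsto (fun n => f (θseq n) x) Filter.atTop (nhds (f θ x))) ∧
        ((¬ ∃ L : ℝ, Filter.Tendsto (fun n => f (θseq n) x) Filter.atTop (nhds L)) →
          f θ x = 0)))
    (hiff : ∀ x y : X, T x = T y ↔ y ∈ DSet f x Set.univ) :
    IsMinimalSufficientStat P T := by
  have happ' : ∀ θ : Θ, ∃ θseq : ℕ → Θ, (∀ n, θseq n ∈ Θ₀) ∧
      (∀ x : X,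
        ((∃ L : ℝ, Filter.Tendsto (fun n => f (θseq n) x) Filter.atTop (nhds L)) →
          Filter.Tendsto (fun n => f (θseq n) x) Filter.atTop (nhds (f θ x))) ∧
        ((¬ ∃ L : ℝ, Filter.Tendsto (fun n => f (θseq n) x) Filter.atTop (nhds L)) →
          f θ x = 0)) := by
    intro θ
    obtain ⟨s, h1, -, h2⟩ := happrox θ
    exact ⟨s, h1, h2⟩
  clear happrox
  obtain ⟨t, ht⟩ := hcount.exists_eq_range hne
  have hf0 : ∀ θ x, 0 ≤ f θ x := fun θ => (hf θ).2.1
  have hfm : ∀ θ, Measurable (f θ) := fun θ => (hf θ).1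
  have hfP : ∀ θ, P θ = μ.withDensity (fun x => ENNReal.ofReal (f θ x)) := fun θ => (hf θ).2.2
  have hext : ∀ (x y : X) (h : ℝ), 0 < h → (∀ n, f (t n) y = f (t n) x * h) → T x = T y := by
    intro x y h hh hxy
    rw [hiff]
    refine ⟨h, hh, fun θ _ => DSet_extend f Θ₀ happ' hh ?_ θ⟩
    rw [ht]; rintro _ ⟨n, rfl⟩; exact hxy n
  have hzero : ∀ x, (∀ n, f (t n) x = 0) → ∀ θ, f θ x = 0 := by
    intro x hx θ
    refine zero_extend f Θ₀ happ' ?_ θ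
    rw [ht]; rintro _ ⟨n, rfl⟩; exact hx n
  let c : ℕ → ENNReal := fun n => 2⁻¹ ^ (n + 1)
  have hc0 : ∀ n, c n ≠ 0 := fun n => by simp [c]
  have hcs : ∑' n, c n = 1 := by
    simp only [c, pow_succ]
    rw [ENNReal.tsum_mul_right, ENNReal.tsum_geometric, ENNReal.one_sub_inv_two, inv_inv]
    exact ENNReal.mul_inv_cancel (by simp) (by simp)
  let l : Measure X := Measure.sum fun n => c n • P (t n)
  have hl : l = Measure.sum fun n => c n • P (t n) := rfl
  have hlp : IsProbabilityMeasure l := by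
    constructor
    rw [hl, Measure.sum_apply _ MeasurableSet.univ]
    simp only [Measure.smul_apply, smul_eq_mul]
    rw [← hcs]
    congr 1
    ext n
    have := hP (t n)
    rw [measure_univ, mul_one]
  let q : X → ENNReal := fun x => ∑' n, c n * ENNReal.ofReal (f (t n) x)
  have hqdef : ∀ x, q x = ∑' n, c n * ENNReal.ofReal (f (t n) x) := fun x => rfl
  have hqm : Measurable q :=
    Measurable.ennreal_tsum fun n => ((hfm _).ennreal_ofReal).const_mul _
  have hlq : l = μ.withDensity q := by
    have : q = ∑' n, fun x => c n * ENNReal.ofReal (f (t n) x) := by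
      ext x
      rw [tsum_apply (Pi.summable.2 fun _ => ENNReal.summable)]
    rw [this, withDensity_tsum (fun n => ((hfm _).ennreal_ofReal).const_mul _), hl]
    congr 1
    ext1 n
    rw [hfP (t n)]
    exact (withDensity_smul _ (hfm _).ennreal_ofReal).symm
  have hqtop : ∀ᵐ x ∂μ, q x < ⊤ := by
    refine ae_lt_top hqm ?_
    have : l Set.univ = 1 := measure_univ
    rw [hlq, withDensity_apply _ MeasurableSet.univ, Measure.restrict_univ] at this
    rw [this]; exact ENNReal.one_ne_top
  have hlac : l ≪ μ := by rw [hlq]; exact withDensity_absolutelyContinuous _ _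
  have hgood : ∀ᵐ x ∂l, q x ≠ 0 ∧ q x ≠ ⊤ := by
    have h1 : ∀ᵐ x ∂l, q x ≠ 0 := by
      rw [hlq, ae_withDensity_iff hqm]
      filter_upwards with x hx using hx
    filter_upwards [h1, hlac.ae_le hqtop] with x a b using ⟨a, b.ne⟩
  let k : Θ → X → ℝ := fun θ x => (ENNReal.ofReal (f θ x) / q x).toReal
  have hkdef : ∀ θ x, k θ x = (ENNReal.ofReal (f θ x) / q x).toReal := fun _ _ => rfl
  have hk0 : ∀ θ x, 0 ≤ k θ x := fun θ x => ENNReal.toReal_nonneg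
  have hkm : ∀ θ, Measurable (k θ) := fun θ =>
    ((hfm θ).ennreal_ofReal.div hqm).ennreal_toReal
  have hkP : ∀ θ, P θ = l.withDensity (fun x => ENNReal.ofReal (k θ x)) := by
    intro θ
    rw [hlq, ← withDensity_mul _ hqm (hkm θ).ennreal_ofReal, hfP θ]
    refine withDensity_congr_ae ?_
    filter_upwards [hqtop] with x hx
    rw [Pi.mul_apply, hkdef]
    by_cases hq0 : q x = 0
    · have : ∀ n, f (t n) x = 0 := by
        intro n
        rw [hqdef, ENNReal.tsum_eq_zero] at hq0
        have h2 := (mul_eq_zero.1 (hq0 n)).resolve_left (hc0 n)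
        exact le_antisymm (ENNReal.ofReal_eq_zero.1 h2) (hf0 _ _)
      rw [hq0, hzero x this θ]; simp
    · rw [ENNReal.ofReal_toReal (ENNReal.div_ne_top ENNReal.ofReal_ne_top hq0),
        ENNReal.mul_div_cancel hq0 hx.ne]
  have hlPac : ∀ θ, P θ ≪ l := by
    intro θ; rw [hkP θ]; exact withDensity_absolutelyContinuous _ _
  have hkT : ∀ θ x y, T x = T y → k θ x = k θ y := by
    intro θ x y hxy
    rw [hiff] at hxy
    obtain ⟨h, hh, hxy⟩ := hxy
    have hqy : q y = q x * ENNReal.ofReal h := by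
      rw [hqdef, hqdef, ← ENNReal.tsum_mul_right]
      congr 1
      ext n
      rw [hxy _ (Set.mem_univ _), ENNReal.ofReal_mul (hf0 _ _), mul_assoc]
    rw [hkdef, hkdef, hqy, hxy θ (Set.mem_univ _), ENNReal.ofReal_mul (hf0 _ _),
      ENNReal.mul_div_mul_right _ _ (by simpa using hh) ENNReal.ofReal_ne_top]
  have hkmT : ∀ θ, Measurable[MeasurableSpace.comap T mT] (k θ) := by
    intro θ
    have := blackwell_aux hX hT (hkm θ) (hkT θ)
    exact measurable_iff_comap_le.2 this
  refine ⟨suff_of_density P hP T hT l k hk0 hkmT hkP, ?_⟩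
  intro S' mS S hS
  let R : X → (ℕ × ℕ → ℝ) := fun x p => f (t p.1) x / f (t p.2) x
  have hRm : Measurable R := measurable_pi_iff.2 fun p => (hfm _).div (hfm _)
  have hRT : ∀ x y, R x = R y → T x = T y := by
    intro x y hxy
    obtain ⟨h, hh, hh2⟩ := ratios_prop (a := fun n => f (t n) x) (b := fun n => f (t n) y)
      (fun n => hf0 _ _) (fun n => hf0 _ _) (fun i j => congrFun hxy (i, j))
    exact hext x y h hh hh2
  have hψ : ∀ n, ∃ ψ : S' → ℝ, Measurable ψ ∧ k (t n) =ᵐ[l] ψ ∘ S := fun n =>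
    density_factor P hP S hS l c t hl (t n) (k (t n)) (hk0 _) (hkm _) (hkP _)
  choose ψ hψm hψe using hψ
  let W : S' → (ℕ × ℕ → ℝ) := fun s p => ψ p.1 s / ψ p.2 s
  have hWm : Measurable W := measurable_pi_iff.2 fun p => (hψm _).div (hψm _)
  have hRW : ∀ᵐ x ∂l, R x = W (S x) := by
    filter_upwards [hgood, ae_all_iff.2 hψe] with x hx hx2
    ext p
    have hkx : ∀ n, ψ n (S x) = f (t n) x / (q x).toReal := by
      intro n
      have := hx2 n
      rw [Function.comp] at this
      rw [← this, hkdef, ENNReal.toReal_div, ENNReal.toReal_ofReal (hf0 _ _)]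
    have hq' : (q x).toReal ≠ 0 := ENNReal.toReal_ne_zero.2 hx
    change f (t p.1) x / f (t p.2) x = ψ p.1 (S x) / ψ p.2 (S x)
    rw [hkx, hkx, div_div_div_cancel_right₀ hq']
  have hRan : AnalyticSet (Set.range R) := by
    obtain ⟨-, -, Y, mY, hY, g, hg, hgs⟩ := hX
    rw [← hgs.range_comp R, ← Set.image_univ]
    exact MeasurableSet.univ.analyticSet_image (hRm.comp hg)
  have hρ : IsProbabilityMeasure (l.map R) := Measure.isProbabilityMeasure_map hRm.aemeasurable
  obtain ⟨B, hBR, hBm, hBρ⟩ := analytic_inner (l.map R) hRan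
  have hB : ∀ᵐ x ∂l, R x ∈ B := by
    have h1 : l.map R (Set.range R) = 1 := by
      refine le_antisymm prob_le_one ?_
      have := Measure.le_map_apply (μ := l) hRm.aemeasurable (Set.range R)
      rwa [Set.preimage_range, measure_univ] at this
    rw [h1, Measure.map_apply hRm hBm] at hBρ
    have h2 : l (R ⁻¹' B) = 1 := le_antisymm prob_le_one hBρ
    exact (mem_ae_iff_prob_eq_one (hRm hBm)).2 h2
  have hXne : Nonempty X := by
    have := hP (Classical.arbitrary Θ)
    exact nonempty_of_isProbabilityMeasure (P (Classical.arbitrary Θ))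
  obtain ⟨x0⟩ := hXne
  have hsel : ∀ w : ℕ × ℕ → ℝ, ∃ x : X, w ∈ B → R x = w := by
    intro w
    by_cases hw : w ∈ B
    · obtain ⟨x, hx⟩ := hBR hw
      exact ⟨x, fun _ => hx⟩
    · exact ⟨x0, fun h => absurd h hw⟩
  choose σ hσ using hsel
  classical
  refine ⟨fun s => if W s ∈ B then T (σ (W s)) else T x0, ?_, ?_⟩
  · intro C hC
    obtain ⟨D, hD, hDe⟩ := blackwell_aux hX hRm hT hRT _ ⟨C, hC, rfl⟩
    have : (fun s => if W s ∈ B then T (σ (W s)) else T x0) ⁻¹' C =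
        (W ⁻¹' B ∩ W ⁻¹' D) ∪ ((W ⁻¹' B)ᶜ ∩ {_s | T x0 ∈ C}) := by
      ext s
      by_cases hs : W s ∈ B
      · have h1 := Set.ext_iff.1 hDe (σ (W s))
        simp only [Set.mem_preimage, hσ _ hs] at h1
        simp [hs, h1]
      · simp [hs]
    rw [this]
    exact ((hWm hBm).inter (hWm hD)).union ((hWm hBm).compl.inter (MeasurableSet.const _))
  · intro θ
    refine (hlPac θ).ae_le ?_
    filter_upwards [hRW, hB] with x h1 h2
    have h3 : W (S x) ∈ B := h1 ▸ h2
    simp only [Function.comp, h3, if_true]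
    apply hRT
    rw [hσ _ h3, h1]
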